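/- Let M be a compact connected boundaryless topological manifold of dimension n with a compatible metric and let f : M → M be an expansive homeomorphism. Then there exists ε > 0 such that for every r with 1 ≤ r ≤ n−1 and every p ∈ Per_H^r there exists a map φ : D̄^r → M, where D̄^r is the closed unit ball of ℝ^r, which is a homeomorphism onto its image, satisfies φ(D̄^r) ⊆ W^s(p) and φ(0) = p, and is such that for every continuous curve y : [0,1] → D̄^r with y(0) = 0 and ‖y(1)‖ = 1 there exists s ∈ (0,1] with φ(y(s)) ∉ B_ε(p). -/

import Mathlib

/-!
Expansivity on a compact space is uniform: two points whose iterates stay `α`-close on a long time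
window `[-N, N]` are close. Hence there is `ε > 0`, independent of `p`, such that a point of
`B_ε(p)` whose forward orbit stays within `α` of that of `p` stays strictly within `α` of it. On a
set that is uniformly asymptotic to `p` this makes the condition both open and closed, so a
connected such set through `p` inside `B_ε(p)` lies in the `α`-local stable set of `p`.

Near a hyperbolic periodic point the linear model provides a stable disk, possibly tiny. Pulling it
back by a large multiple of the period pushes its boundary sphere off the `α`-local stable set,
again by uniform expansivity, so a curve from the centre to the boundary cannot stay in `B_ε(p)`.
-/

open Metric Set

variable {M : Type*} [MetricSpace M]

/-- Iterates of a homeomorphism, indexed by `ℤ`. -/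
def iterZ (f : M ≃ₜ M) (k : ℤ) (x : M) : M := (f.toEquiv ^ k) x

/-- `f` is expansive with expansivity constant `α`. -/
def IsExpansive (f : M ≃ₜ M) (α : ℝ) : Prop :=
  ∀ x y : M, x ≠ y → ∃ k : ℤ, α < dist (iterZ f k x) (iterZ f k y)

/-- Stable set of `x`. -/
def Ws (f : M ≃ₜ M) (x : M) : Set M :=
  {y | Filter.Tendsto (fun k : ℤ => dist (iterZ f k x) (iterZ f k y)) Filter.atTop (nhds 0)}

/-- Unstable set of `x`. -/
def Wu (f : M ≃ₜ M) (x : M) : Set M :=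
  {y | Filter.Tendsto (fun k : ℤ => dist (iterZ f k x) (iterZ f k y)) Filter.atBot (nhds 0)}

/-- Local (`ε`-local) stable set of `x`. -/
def WsLoc (f : M ≃ₜ M) (ε : ℝ) (x : M) : Set M :=
  {y | ∀ k : ℤ, 0 ≤ k → dist (iterZ f k x) (iterZ f k y) ≤ ε}

/-- Local (`ε`-local) unstable set of `x`. -/
def WuLoc (f : M ≃ₜ M) (ε : ℝ) (x : M) : Set M :=
  {y | ∀ k : ℤ, k ≤ 0 → dist (iterZ f k x) (iterZ f k y) ≤ ε}

/-- The model space `ℝ^r × ℝ^{n-r}`. -/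
abbrev ModelSp (n r : ℕ) := (Fin r → ℝ) × (Fin (n - r) → ℝ)

/-- The model hyperbolic linear map `L(a,b) = (a/2, 2b)`. -/
noncomputable def modelL (n r : ℕ) : ModelSp n r → ModelSp n r :=
  fun q => (fun i => q.1 i / 2, fun i => 2 * q.2 i)

/-- Topologically hyperbolic periodic points of index `r` (`Per_H^r`). -/
def PerHr (f : M ≃ₜ M) (n r : ℕ) : Set M :=
  {p | ∃ l : ℕ, 1 ≤ l ∧ (f.toEquiv ^ l) p = p ∧
    ∃ (U : Set M) (V : Set (ModelSp n r)) (h : U ≃ₜ V),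
      IsOpen U ∧ IsOpen V ∧ (0 : ModelSp n r) ∈ V ∧
      ∃ hp : p ∈ U, ((h ⟨p, hp⟩ : V) : ModelSp n r) = 0 ∧
        ∀ z : M, ∀ hz : z ∈ U, ∀ hz' : (f.toEquiv ^ l) z ∈ U,
          ((h ⟨(f.toEquiv ^ l) z, hz'⟩ : V) : ModelSp n r) = modelL n r (h ⟨z, hz⟩)}

/-- All topologically hyperbolic periodic points (`Per_H`). -/
def PerH (f : M ≃ₜ M) (n : ℕ) : Set M := ⋃ r ∈ Finset.range (n + 1), PerHr f n r

/-- `p` admits a local product structure. -/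
def AdmitsLPS (f : M ≃ₜ M) (n : ℕ) (p : M) : Prop :=
  ∃ (k : ℕ) (h : (Fin k → ℝ) × (Fin (n - k) → ℝ) → M) (ε : ℝ),
    0 < ε ∧ Topology.IsEmbedding h ∧ p ∈ Set.range h ∧
    ∀ x : Fin k → ℝ, ∀ y : Fin (n - k) → ℝ,
      h '' ({x} ×ˢ univ) = WsLoc f ε (h (x, y)) ∩ Set.range h ∧
      h '' (univ ×ˢ {y}) = WuLoc f ε (h (x, y)) ∩ Set.range h

section Iterates

variable (f : M ≃ₜ M)

theorem iterZ_zero (x : M) : iterZ f 0 x = x := by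
  simp [iterZ]

theorem iterZ_add (a b : ℤ) (x : M) : iterZ f (a + b) x = iterZ f a (iterZ f b x) := by
  simp only [iterZ, zpow_add, Equiv.Perm.mul_apply]

theorem iterZ_comm (a b : ℤ) (x : M) : iterZ f a (iterZ f b x) = iterZ f b (iterZ f a x) := by
  rw [← iterZ_add, add_comm, iterZ_add]

theorem iterZ_injective (k : ℤ) : Function.Injective (iterZ f k) :=
  (f.toEquiv ^ k).injective

theorem iterZ_mul_eq_self {f : M ≃ₜ M} {l : ℤ} {p : M} (hp : iterZ f l p = p) (m : ℤ) :
    iterZ f (l * m) p = p := by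
  rw [iterZ, zpow_mul]
  exact Equiv.Perm.zpow_apply_eq_self_of_apply_eq_self hp m

theorem iterZ_eq_zpow (k : ℤ) : iterZ f k = ⇑(f ^ k) := by
  let toPerm : (M ≃ₜ M) →* Equiv.Perm M :=
    { toFun := Homeomorph.toEquiv, map_one' := rfl, map_mul' := fun _ _ => rfl }
  exact congrArg DFunLike.coe (map_zpow toPerm f k).symm

theorem continuous_iterZ (k : ℤ) : Continuous (iterZ f k) :=
  iterZ_eq_zpow f k ▸ (f ^ k).continuous

theorem continuous_dist_iterZ (k : ℤ) :
    Continuous fun q : M × M => dist (iterZ f k q.1) (iterZ f k q.2) :=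
  ((continuous_iterZ f k).comp continuous_fst).dist ((continuous_iterZ f k).comp continuous_snd)

theorem isOpen_setOf_dist_iterZ_lt (p : M) (k : ℤ) (e : ℝ) :
    IsOpen {x | dist (iterZ f k p) (iterZ f k x) < e} :=
  isOpen_lt (continuous_const.dist (continuous_iterZ f k)) continuous_const

theorem exists_pos_forall_dist_iterZ_lt [CompactSpace M] (s : Finset ℤ) {e : ℝ} (he : 0 < e) :
    ∃ δ > 0, ∀ x y : M, dist x y < δ → ∀ k ∈ s, dist (iterZ f k x) (iterZ f k y) < e := by
  have hequi : UniformEquicontinuous fun k : s => iterZ f k :=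
    uniformEquicontinuous_finite.2 fun k =>
      CompactSpace.uniformContinuous_of_continuous (continuous_iterZ f k)
  obtain ⟨δ, hδ, hdist⟩ := Metric.uniformEquicontinuous_iff.1 hequi e he
  exact ⟨δ, hδ, fun x y hxy k hk => hdist x y hxy ⟨k, hk⟩⟩

end Iterates

section Expansive

variable {f : M ≃ₜ M} {α : ℝ} {p : M} {C : Set M}

theorem IsExpansive.exists_forall_dist_lt [CompactSpace M] (hexp : IsExpansive f α) {η : ℝ}
    (hη : 0 < η) :
    ∃ N : ℕ, ∀ x y : M, (∀ k : ℤ, |k| ≤ N → dist (iterZ f k x) (iterZ f k y) ≤ α) →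
      dist x y < η := by
  have hcompact : IsCompact {q : M × M | η ≤ dist q.1 q.2} :=
    (isClosed_le continuous_const continuous_dist).isCompact
  obtain ⟨t, ht⟩ := hcompact.elim_finite_subcover
    (fun k : ℤ => {q : M × M | α < dist (iterZ f k q.1) (iterZ f k q.2)})
    (fun k => isOpen_lt continuous_const (continuous_dist_iterZ f k))
    (fun q hq => mem_iUnion.2 (hexp q.1 q.2 (dist_pos.1 (hη.trans_le hq))))
  refine ⟨t.sup Int.natAbs, fun x y hclose => ?_⟩
  by_contra! hfar
  obtain ⟨k, hkt, hk⟩ := mem_iUnion₂.1 (ht (show (x, y) ∈ _ from hfar))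
  have hkN : |k| ≤ (t.sup Int.natAbs : ℕ) := by
    rw [Int.abs_eq_natAbs]
    exact_mod_cast Finset.le_sup (f := Int.natAbs) hkt
  exact (hclose k hkN).not_gt hk

theorem IsExpansive.exists_pos_forall_dist_lt_of_mem_wsLoc [CompactSpace M]
    (hexp : IsExpansive f α) (hα : 0 < α) :
    ∃ ε > 0, ∀ p, ∀ x ∈ ball p ε, x ∈ WsLoc f α p →
      ∀ k : ℤ, 0 ≤ k → dist (iterZ f k p) (iterZ f k x) < α := by
  obtain ⟨N, hN⟩ := hexp.exists_forall_dist_lt hα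
  obtain ⟨ε, hε, hclose⟩ := exists_pos_forall_dist_iterZ_lt f (Finset.Icc 0 (N : ℤ)) hα
  refine ⟨ε, hε, fun p x hx hloc k hk => ?_⟩
  rcases le_or_gt k N with hkN | hNk
  · exact hclose p x (mem_ball'.1 hx) k (Finset.mem_Icc.2 ⟨hk, hkN⟩)
  · refine hN _ _ fun j hj => ?_
    rw [← iterZ_add, ← iterZ_add]
    exact hloc (j + k) (by linarith [neg_le_of_abs_le hj])

/-- The orbits of the points of `C` are asymptotic to the orbit of `p`, uniformly on `C`: the
uniform version of `C ⊆ Ws f p`. -/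
def UniformlyAsymptotic (f : M ≃ₜ M) (p : M) (C : Set M) : Prop :=
  TendstoUniformlyOn (fun (k : ℤ) x => dist (iterZ f k p) (iterZ f k x)) 0 Filter.atTop C

theorem uniformlyAsymptotic_iff :
    UniformlyAsymptotic f p C ↔
      ∀ e > 0, ∃ K : ℤ, ∀ k ≥ K, ∀ x ∈ C, dist (iterZ f k p) (iterZ f k x) < e := by
  simp only [UniformlyAsymptotic, Metric.tendstoUniformlyOn_iff, Filter.eventually_atTop,
    Pi.zero_apply, dist_zero_left, Real.norm_of_nonneg dist_nonneg]

theorem UniformlyAsymptotic.subset_ws (h : UniformlyAsymptotic f p C) : C ⊆ Ws f p :=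
  fun _ hx => h.tendsto_at hx

theorem IsExpansive.exists_pos_forall_subset_wsLoc [CompactSpace M]
    (hexp : IsExpansive f α) (hα : 0 < α) :
    ∃ ε > 0, ∀ p, ∀ C ⊆ ball p ε, IsPreconnected C → p ∈ C → UniformlyAsymptotic f p C →
      C ⊆ WsLoc f α p := by
  obtain ⟨ε, hε, hstrict⟩ := hexp.exists_pos_forall_dist_lt_of_mem_wsLoc hα
  refine ⟨ε, hε, fun p C hCε hC hpC hasymp => ?_⟩
  obtain ⟨K, hK⟩ := uniformlyAsymptotic_iff.1 hasymp α hα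
  -- On `C` only the iterates before time `K` matter, so strict `α`-closeness is an open condition.
  let u : Set M := ⋂ k ∈ Finset.Ico 0 K, {x | dist (iterZ f k p) (iterZ f k x) < α}
  have hu : IsOpen u := isOpen_biInter_finset fun k _ => isOpen_setOf_dist_iterZ_lt f p k α
  have hWsLoc {x : M} (hx : x ∈ C)
      (hle : ∀ k ∈ Finset.Ico 0 K, dist (iterZ f k p) (iterZ f k x) ≤ α) : x ∈ WsLoc f α p := by
    intro k hk
    rcases lt_or_ge k K with hkK | hKk
    · exact hle k (Finset.mem_Ico.2 ⟨hk, hkK⟩)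
    · exact (hK k hKk x hx).le
  have hclosure : closure u ∩ C ⊆ u := by
    rintro x ⟨hxu, hxC⟩
    have hle : ∀ k ∈ Finset.Ico 0 K, dist (iterZ f k p) (iterZ f k x) ≤ α := fun k hk =>
      closure_lt_subset_le (continuous_const.dist (continuous_iterZ f k)) continuous_const
        (closure_mono (biInter_subset_of_mem hk) hxu)
    exact mem_iInter₂.2 fun k hk =>
      hstrict p x (hCε hxC) (hWsLoc hxC hle) k (Finset.mem_Ico.1 hk).1
  have hpu : p ∈ u := mem_iInter₂.2 fun k _ => by simpa using hα
  have hCu : C ⊆ u := hC.subset_of_closure_inter_subset hu ⟨p, hpC, hpu⟩ hclosure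
  exact fun x hx => hWsLoc hx fun k hk => (mem_iInter₂.1 (hCu hx) k hk).le

end Expansive

section ContractingDisk

variable {E : Type*} [NormedAddCommGroup E] [NormedSpace ℝ E]

/-- `H` parametrizes a topological disk centred at `p`, by the closed unit ball of `E`, on which
`f ^ l` acts as the homothety of ratio `1 / 2`. The values of `H` off the closed ball are
irrelevant. -/
structure IsContractingDisk (f : M ≃ₜ M) (l : ℕ) (p : M) (H : E → M) : Prop where
  continuousOn : ContinuousOn H (closedBall 0 1)
  injOn : InjOn H (closedBall 0 1)
  map_zero : H 0 = p
  iterZ_apply : ∀ x ∈ closedBall (0 : E) 1, iterZ f l (H x) = H ((1 / 2 : ℝ) • x)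

namespace IsContractingDisk

variable {f : M ≃ₜ M} {l : ℕ} {p : M} {H : E → M}

theorem iterZ_center (hH : IsContractingDisk f l p H) : iterZ f l p = p := by
  simpa [hH.map_zero] using hH.iterZ_apply 0 (by simp)

theorem iterZ_comp (hH : IsContractingDisk f l p H) (m : ℤ) :
    IsContractingDisk f l (iterZ f m p) (iterZ f m ∘ H) where
  continuousOn := (continuous_iterZ f m).comp_continuousOn hH.continuousOn
  injOn := (iterZ_injective f m).comp_injOn hH.injOn
  map_zero := congrArg (iterZ f m) hH.map_zero
  iterZ_apply x hx := by
    rw [Function.comp_apply, iterZ_comm, hH.iterZ_apply x hx, Function.comp_apply]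

theorem iterZ_mul_apply (hH : IsContractingDisk f l p H) {x : E} (hx : x ∈ closedBall 0 1)
    (i : ℕ) : iterZ f (l * i) (H x) = H ((1 / 2 : ℝ) ^ i • x) := by
  induction i with
  | zero => simp [iterZ_zero]
  | succ i ih =>
    have hmem : (1 / 2 : ℝ) ^ i • x ∈ closedBall (0 : E) 1 :=
      (convex_closedBall 0 1).smul_mem_of_zero_mem (by simp) hx
        ⟨by positivity, pow_le_one₀ (by norm_num) (by norm_num)⟩
    rw [Nat.cast_succ, mul_add_one, add_comm, iterZ_add, ih, hH.iterZ_apply _ hmem, smul_smul,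
      ← pow_succ']

theorem eventually_iterZ_mul_mem (hH : IsContractingDisk f l p H) {W : Set M} (hW : W ∈ nhds p) :
    ∀ᶠ i : ℕ in Filter.atTop, ∀ x ∈ closedBall (0 : E) 1, iterZ f (l * i) (H x) ∈ W := by
  have hcont : ContinuousAt H 0 := hH.continuousOn.continuousAt (closedBall_mem_nhds 0 one_pos)
  obtain ⟨δ, hδ, hδW⟩ := Metric.mem_nhds_iff.1 (hcont (hH.map_zero.symm ▸ hW))
  have hpow := (tendsto_pow_atTop_nhds_zero_of_lt_one (r := (1 / 2 : ℝ)) (by norm_num)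
    (by norm_num)).eventually_lt_const hδ
  filter_upwards [hpow] with i hi x hx
  rw [hH.iterZ_mul_apply hx]
  refine hδW (mem_ball_zero_iff.2 ?_)
  calc ‖(1 / 2 : ℝ) ^ i • x‖ = (1 / 2) ^ i * ‖x‖ := by
        rw [norm_smul, Real.norm_of_nonneg (by positivity)]
    _ ≤ (1 / 2) ^ i := mul_le_of_le_one_right (by positivity) (mem_closedBall_zero_iff.1 hx)
    _ < δ := hi

theorem uniformlyAsymptotic (hH : IsContractingDisk f l p H) (hl : 1 ≤ l) :
    UniformlyAsymptotic f p (H '' closedBall 0 1) := by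
  refine uniformlyAsymptotic_iff.2 fun e he => ?_
  let W : Set M := ⋂ j ∈ Finset.Ico 0 (l : ℤ), {z | dist (iterZ f j p) (iterZ f j z) < e}
  have hW : W ∈ nhds p :=
    (isOpen_biInter_finset fun j _ => isOpen_setOf_dist_iterZ_lt f p j e).mem_nhds
      (mem_iInter₂.2 fun j _ => by simpa using he)
  obtain ⟨I, hI⟩ := Filter.eventually_atTop.1 (hH.eventually_iterZ_mul_mem hW)
  have hl0 : (0 : ℤ) < l := by exact_mod_cast hl
  refine ⟨l * I, fun k hk => forall_mem_image.2 fun x hx => ?_⟩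
  have hIk : (I : ℤ) ≤ k / l := (Int.le_ediv_iff_mul_le hl0).2 (by rwa [mul_comm])
  obtain ⟨i, hi⟩ := Int.eq_ofNat_of_zero_le ((Int.natCast_nonneg I).trans hIk)
  have hmem : iterZ f (l * i) (H x) ∈ W := hI i (by omega) x hx
  have hrem : k % l ∈ Finset.Ico 0 (l : ℤ) :=
    Finset.mem_Ico.2 ⟨Int.emod_nonneg k hl0.ne', Int.emod_lt_of_pos k hl0⟩
  have hclose : dist (iterZ f (k % l) p) (iterZ f (k % l) (iterZ f (l * i) (H x))) < e :=
    mem_iInter₂.1 hmem (k % l) hrem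
  have hk_eq : k = k % l + l * i := by rw [← hi, Int.emod_add_mul_ediv]
  rwa [hk_eq, iterZ_add, iterZ_add, iterZ_mul_eq_self hH.iterZ_center]

theorem isEmbedding_domRestrict [ProperSpace E] (hH : IsContractingDisk f l p H) :
    Topology.IsEmbedding ((closedBall (0 : E) 1).domRestrict H) := by
  have : CompactSpace (closedBall (0 : E) 1) :=
    isCompact_iff_compactSpace.1 (isCompact_closedBall 0 1)
  exact (hH.continuousOn.domRestrict.isClosedEmbedding hH.injOn.injective).isEmbedding

theorem exists_pos_forall_le_dist [ProperSpace E] (hH : IsContractingDisk f l p H) :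
    ∃ η > 0, ∀ x : E, ‖x‖ = 1 → η ≤ dist p (H x) := by
  have hcompact : IsCompact (H '' sphere 0 1) :=
    (isCompact_sphere 0 1).image_of_continuousOn (hH.continuousOn.mono sphere_subset_closedBall)
  have hp : p ∉ H '' sphere 0 1 := by
    rintro ⟨x, hx, hxp⟩
    have hx0 : x = 0 :=
      hH.injOn (sphere_subset_closedBall hx) (by simp) (hxp.trans hH.map_zero.symm)
    simp [hx0] at hx
  obtain ⟨η, hη, hball⟩ := Metric.isOpen_iff.1 hcompact.isClosed.isOpen_compl p hp
  refine ⟨η, hη, fun x hx => ?_⟩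
  by_contra! hlt
  exact hball (mem_ball'.2 hlt) (mem_image_of_mem H (mem_sphere_zero_iff_norm.2 hx))

theorem exists_forall_notMem_wsLoc [ProperSpace E] [CompactSpace M] {α : ℝ}
    (hexp : IsExpansive f α) (hH : IsContractingDisk f l p H) (hl : 1 ≤ l) :
    ∃ φ : E → M, IsContractingDisk f l p φ ∧ ∀ x : E, ‖x‖ = 1 → φ x ∉ WsLoc f α p := by
  obtain ⟨η, hη, hfar⟩ := hH.exists_pos_forall_le_dist
  obtain ⟨N, hN⟩ := hexp.exists_forall_dist_lt hη
  have hperiod : iterZ f (l * N) p = p := iterZ_mul_eq_self hH.iterZ_center N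
  have hpull : iterZ f (-(l * N)) p = p := by
    simpa only [mul_neg] using iterZ_mul_eq_self hH.iterZ_center (-N)
  refine ⟨iterZ f (-(l * N)) ∘ H, ?_, fun x hx hloc => (hfar x hx).not_gt (hN _ _ fun k hk => ?_)⟩
  · simpa only [hpull] using hH.iterZ_comp (-(l * N))
  · have hNl : (N : ℤ) ≤ l * N := by exact_mod_cast Nat.le_mul_of_pos_left N hl
    have hclose := hloc (k + l * N) (by linarith [neg_le_of_abs_le hk])
    rwa [Function.comp_apply, ← iterZ_add, add_neg_cancel_right, iterZ_add, hperiod] at hclose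

end IsContractingDisk

end ContractingDisk

section HyperbolicPeriodicPoint

variable {f : M ≃ₜ M} {n r : ℕ} {p : M}

theorem exists_localParametrization_of_mem_perHr (hp : p ∈ PerHr f n r) :
    ∃ l : ℕ, 1 ≤ l ∧ ∃ (T : Set (ModelSp n r)) (g : ModelSp n r → M),
      T ∈ nhds 0 ∧ ContinuousOn g T ∧ InjOn g T ∧ g 0 = p ∧
      ∀ q ∈ T, iterZ f l (g q) = g (modelL n r q) := by
  obtain ⟨l, hl, hlp, U, V, h, hU, hV, h0V, hpU, hhp, hconj⟩ := hp
  have hpow (z : M) : (f.toEquiv ^ l) z = iterZ f l z := by rw [iterZ, zpow_natCast]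
  simp only [hpow] at hlp hconj
  obtain ⟨g, hg⟩ : ∃ g : ModelSp n r → M, ∀ v : V, g v = h.symm v :=
    ⟨Function.extend Subtype.val (fun v => h.symm v) fun _ => p,
      Subtype.val_injective.extend_apply _ _⟩
  have hgh (u : U) : g (h u) = u := by rw [hg, h.symm_apply_apply]
  have hg0 : g 0 = p := by rw [← hhp, hgh]
  have hgV : ContinuousOn g V := continuousOn_iff_continuous_domRestrict.2 <|
    (continuous_subtype_val.comp h.symm.continuous).congr fun v => (hg v).symm
  have hinj : InjOn g V := fun q hq q' hq' heq => by
    rw [hg ⟨q, hq⟩, hg ⟨q', hq'⟩] at heq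
    exact congrArg Subtype.val (h.symm.injective (Subtype.ext heq))
  let T : Set (ModelSp n r) := V ∩ g ⁻¹' (iterZ f l ⁻¹' U)
  have hT : IsOpen T := hgV.isOpen_inter_preimage hV (hU.preimage (continuous_iterZ f l))
  have h0T : (0 : ModelSp n r) ∈ T := ⟨h0V, by simpa only [mem_preimage, hg0, hlp] using hpU⟩
  refine ⟨l, hl, T, g, hT.mem_nhds h0T, hgV.mono inter_subset_left, hinj.mono inter_subset_left,
    hg0, fun q ⟨hqV, hqU⟩ => ?_⟩
  have hgq : g q = h.symm ⟨q, hqV⟩ := hg ⟨q, hqV⟩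
  have hgqU : g q ∈ U := hgq ▸ (h.symm ⟨q, hqV⟩).2
  have hhgq : h ⟨g q, hgqU⟩ = ⟨q, hqV⟩ := by simp only [hgq, Subtype.coe_eta, h.apply_symm_apply]
  have hL := hconj (g q) hgqU hqU
  rw [hhgq] at hL
  rw [← hL, hgh]

theorem exists_isContractingDisk_of_mem_perHr (hp : p ∈ PerHr f n r) :
    ∃ l : ℕ, 1 ≤ l ∧ ∃ H : EuclideanSpace ℝ (Fin r) → M, IsContractingDisk f l p H := by
  obtain ⟨l, hl, T, g, hT, hgT, hinj, hg0, hconj⟩ := exists_localParametrization_of_mem_perHr hp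
  let ψ : EuclideanSpace ℝ (Fin r) →L[ℝ] ModelSp n r :=
    (ContinuousLinearMap.inl ℝ (Fin r → ℝ) (Fin (n - r) → ℝ)).comp
      (EuclideanSpace.equiv (Fin r) ℝ : EuclideanSpace ℝ (Fin r) →L[ℝ] Fin r → ℝ)
  have hψinj : Function.Injective ψ :=
    LinearMap.inl_injective.comp (EuclideanSpace.equiv (Fin r) ℝ).injective
  have hψL (x : EuclideanSpace ℝ (Fin r)) : modelL n r (ψ x) = ψ ((1 / 2 : ℝ) • x) := by
    ext i <;> simp [modelL, ψ, div_eq_inv_mul]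
  obtain ⟨δ, hδ, hδT⟩ := Metric.nhds_basis_closedBall.mem_iff.1
    (ψ.continuous.continuousAt.preimage_mem_nhds (t := T) (by rwa [map_zero]))
  have hmaps : MapsTo (fun x => ψ (δ • x)) (closedBall 0 1) T := fun x hx => hδT <| by
    simpa [norm_smul, abs_of_pos hδ, hδ] using hx
  refine ⟨l, hl, fun x => g (ψ (δ • x)), ?_, ?_, ?_, fun x hx => ?_⟩
  · exact hgT.comp (by fun_prop) hmaps
  · exact hinj.comp (hψinj.comp (smul_right_injective _ hδ.ne')).injOn hmaps
  · rw [smul_zero, map_zero, hg0]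
  · rw [hconj _ (hmaps hx), hψL, smul_comm]

end HyperbolicPeriodicPoint

theorem stmt7_general {M : Type*} [MetricSpace M] [CompactSpace M]
    (f : M ≃ₜ M) (α : ℝ) (hα : 0 < α) (hexp : IsExpansive f α) :
    ∃ ε : ℝ, 0 < ε ∧ ∀ n r : ℕ, ∀ p ∈ PerHr f n r,
      ∃ φ : EuclideanSpace ℝ (Fin r) → M,
        Topology.IsEmbedding ((Metric.closedBall (0 : EuclideanSpace ℝ (Fin r)) 1).domRestrict φ) ∧
        φ '' Metric.closedBall 0 1 ⊆ Ws f p ∧ φ 0 = p ∧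
        ∀ y : ℝ → EuclideanSpace ℝ (Fin r), ContinuousOn y (Set.Icc 0 1) →
          (∀ t ∈ Set.Icc (0 : ℝ) 1, y t ∈ Metric.closedBall (0 : EuclideanSpace ℝ (Fin r)) 1) →
          y 0 = 0 → ‖y 1‖ = 1 →
          ∃ s ∈ Set.Ioc (0 : ℝ) 1, φ (y s) ∉ Metric.ball p ε := by
  obtain ⟨ε, hε, hWsLoc⟩ := hexp.exists_pos_forall_subset_wsLoc hα
  refine ⟨ε, hε, fun n r p hp => ?_⟩
  obtain ⟨l, hl, H, hH⟩ := exists_isContractingDisk_of_mem_perHr hp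
  obtain ⟨φ, hφ, hsphere⟩ := hH.exists_forall_notMem_wsLoc hexp hl
  have hasymp := hφ.uniformlyAsymptotic hl
  refine ⟨φ, hφ.isEmbedding_domRestrict, hasymp.subset_ws, hφ.map_zero, fun y hy hyD hy0 hy1 => ?_⟩
  by_contra! hstay
  let C : Set M := (fun s => φ (y s)) '' Icc (0 : ℝ) 1
  have hstart : φ (y 0) = p := by rw [hy0, hφ.map_zero]
  have hC : IsPreconnected C := isPreconnected_Icc.image _ (hφ.continuousOn.comp hy hyD)
  have hpC : p ∈ C := ⟨0, by simp, hstart⟩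
  have hCball : C ⊆ ball p ε := forall_mem_image.2 fun s hs => by
    rcases hs.1.eq_or_lt with rfl | hpos
    · simpa only [hstart] using mem_ball_self hε
    · exact hstay s ⟨hpos, hs.2⟩
  have hCdisk : C ⊆ φ '' closedBall 0 1 :=
    forall_mem_image.2 fun s hs => mem_image_of_mem φ (hyD s hs)
  exact hsphere (y 1) hy1 (hWsLoc p C hCball hC hpC (hasymp.mono hCdisk) ⟨1, by simp, rfl⟩)

/-- **Lemma (size of stable disks of periodic points).** There is a uniform `ε > 0` such
that each `p ∈ Per_H^r` has a disk `φ : D̄^r → W^s(p)`, a homeomorphism onto its image with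
`φ(0) = p`, such that any curve in `D̄^r` from the center to the boundary has a point whose
image leaves `B_ε(p)`. -/
theorem stmt7 {M : Type*} [MetricSpace M] [CompactSpace M] [ConnectedSpace M]
    (n : ℕ) [ChartedSpace (EuclideanSpace ℝ (Fin n)) M]
    (f : M ≃ₜ M) (α : ℝ) (hα : 0 < α) (hexp : IsExpansive f α) :
    ∃ ε : ℝ, 0 < ε ∧ ∀ r : ℕ, 1 ≤ r → r ≤ n - 1 → ∀ p ∈ PerHr f n r,
      ∃ φ : EuclideanSpace ℝ (Fin r) → M,
        Topology.IsEmbedding ((Metric.closedBall (0 : EuclideanSpace ℝ (Fin r)) 1).restrict φ) ∧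
        φ '' Metric.closedBall 0 1 ⊆ Ws f p ∧ φ 0 = p ∧
        ∀ y : ℝ → EuclideanSpace ℝ (Fin r), ContinuousOn y (Set.Icc 0 1) →
          (∀ t ∈ Set.Icc (0 : ℝ) 1, y t ∈ Metric.closedBall (0 : EuclideanSpace ℝ (Fin r)) 1) →
          y 0 = 0 → ‖y 1‖ = 1 →
          ∃ s ∈ Set.Ioc (0 : ℝ) 1, φ (y s) ∉ Metric.ball p ε := by
  obtain ⟨ε, hε, hdisk⟩ := stmt7_general f α hα hexp
  exact ⟨ε, hε, fun r _ _ => hdisk n r⟩
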